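/- With $\widetilde{k}_j(\theta) = \frac{\sin(j\pi/6)}{\sin(j\pi/6+\theta)}$ for $j=1,\dots,5$, one has $4\pi\int_{0}^{\pi/6} \frac{\sin^2\theta}{\big(\widetilde{k}_1(\theta)\cdots\widetilde{k}_5(\theta)\big)^2}\cdot\frac{\widetilde{k}_1(\theta)^2+\widetilde{k}_5(\theta)^2}{2}\,d\theta = \frac{\pi^2}{36}+\frac{11\sqrt{3}}{480}\pi$. -/

import Mathlib

/-!
The addition formula gives `k̃_j(θ)⁻¹ = cos θ + cot (jπ/6) sin θ`, and `cot (jπ/6)` changes sign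
under `j ↦ 6 - j`. Pairing `k̃₁` with `k̃₅` and `k̃₂` with `k̃₄` therefore leaves only
`cot² (π/6) = 3` and `cot² (π/3) = 1/3`, and the integrand becomes a polynomial in
`cos² θ` and `sin² θ`, hence in `cos 2θ`. After the substitution `t = 2θ` it splits into `sin² t`,
`sin² t cos² t` and terms `sinⁿ t cos t`.
-/

open Real MeasureTheory

/-- The contraction factor `k̃_j(θ) = sin(jπ/6)/sin(jπ/6+θ)` of the focal map. -/
noncomputable def ktil (j : ℕ) (θ : ℝ) : ℝ :=
  Real.sin ((j : ℝ) * π / 6) / Real.sin ((j : ℝ) * π / 6 + θ)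

/-- The function of `θ` integrated in the coefficient of `‖∇φ‖₂²`. By `x / 0 = 0` it
vanishes wherever some `ktil j θ` does. -/
noncomputable def energyIntegrand (θ : ℝ) : ℝ :=
  sin θ ^ 2 / (ktil 1 θ * ktil 2 θ * ktil 3 θ * ktil 4 θ * ktil 5 θ) ^ 2
    * ((ktil 1 θ ^ 2 + ktil 5 θ ^ 2) / 2)

/-- The polynomial `p` for which `p (cos 2θ) / 36` is the energy integrand on `(0, π/6)`. -/
def energyPoly (u : ℝ) : ℝ :=
  (1 - u ^ 2) * (1 + 2 * u) ^ 2 * (2 - u)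

section ContractionFactors

variable {i j : ℕ} {θ : ℝ}

lemma sin_mul_pi_div_six_pos (h0 : 0 < j) (h6 : j < 6) : 0 < sin (j * π / 6) := by
  have hj6 : (j : ℝ) < 6 := by exact_mod_cast h6
  apply sin_pos_of_pos_of_lt_pi
  · positivity
  · nlinarith [pi_pos]

lemma ktil_pos (h0 : 0 < j) (h6 : j < 6) (hθ0 : 0 < j * π / 6 + θ) (hθπ : j * π / 6 + θ < π) :
    0 < ktil j θ :=
  div_pos (sin_mul_pi_div_six_pos h0 h6) (sin_pos_of_pos_of_lt_pi hθ0 hθπ)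

lemma ktil_eq_ktil_neg (hij : i + j = 6) (θ : ℝ) : ktil i θ = ktil j (-θ) := by
  have hi : (i : ℝ) = 6 - j := by
    rw [eq_sub_iff_add_eq]
    exact_mod_cast hij
  rw [ktil, ktil, hi, ← sin_pi_sub ((6 - j) * π / 6), ← sin_pi_sub ((6 - j) * π / 6 + θ)]
  congr 2 <;> ring

lemma inv_ktil (hj : sin (j * π / 6) ≠ 0) (θ : ℝ) :
    (ktil j θ)⁻¹ = cos θ + cot (j * π / 6) * sin θ := by
  rw [ktil, inv_div, sin_add, cot_eq_cos_div_sin]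
  field_simp

lemma inv_ktil_mul_inv_ktil (hij : i + j = 6) (hj : sin (j * π / 6) ≠ 0) (θ : ℝ) :
    (ktil i θ)⁻¹ * (ktil j θ)⁻¹ = cos θ ^ 2 - cot (j * π / 6) ^ 2 * sin θ ^ 2 := by
  rw [ktil_eq_ktil_neg hij, inv_ktil hj, inv_ktil hj, cos_neg, sin_neg]
  ring

lemma inv_ktil_sq_add_inv_ktil_sq (hij : i + j = 6) (hj : sin (j * π / 6) ≠ 0) (θ : ℝ) :
    (ktil i θ)⁻¹ ^ 2 + (ktil j θ)⁻¹ ^ 2 =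
      2 * (cos θ ^ 2 + cot (j * π / 6) ^ 2 * sin θ ^ 2) := by
  rw [ktil_eq_ktil_neg hij, inv_ktil hj, inv_ktil hj, cos_neg, sin_neg]
  ring

lemma cot_pi_div_six_sq : cot (π / 6) ^ 2 = 3 := by
  rw [← inv_inv (cot _), cot_inv_eq_tan, tan_pi_div_six]
  simp

lemma cot_pi_div_three_sq : cot (π / 3) ^ 2 = 1 / 3 := by
  rw [← inv_inv (cot _), cot_inv_eq_tan, tan_pi_div_three]
  simp

lemma inv_ktil_three (θ : ℝ) : (ktil 3 θ)⁻¹ = cos θ := by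
  have h3 : ((3 : ℕ) : ℝ) * π / 6 = π / 2 := by push_cast; ring
  rw [inv_ktil (by rw [h3, sin_pi_div_two]; exact one_ne_zero), h3, cot_eq_cos_div_sin,
    cos_pi_div_two]
  ring

lemma inv_ktil_four_mul_inv_ktil_two (θ : ℝ) :
    (ktil 4 θ)⁻¹ * (ktil 2 θ)⁻¹ = cos θ ^ 2 - sin θ ^ 2 / 3 := by
  have h2 : ((2 : ℕ) : ℝ) * π / 6 = π / 3 := by push_cast; ring
  have hsin := (sin_mul_pi_div_six_pos two_pos (by norm_num)).ne'
  rw [inv_ktil_mul_inv_ktil (by norm_num) hsin, h2, cot_pi_div_three_sq]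
  ring

lemma inv_ktil_five_sq_add_inv_ktil_one_sq (θ : ℝ) :
    (ktil 5 θ)⁻¹ ^ 2 + (ktil 1 θ)⁻¹ ^ 2 = 2 * (cos θ ^ 2 + 3 * sin θ ^ 2) := by
  have h1 : ((1 : ℕ) : ℝ) * π / 6 = π / 6 := by push_cast; ring
  have hsin := (sin_mul_pi_div_six_pos one_pos (by norm_num)).ne'
  rw [inv_ktil_sq_add_inv_ktil_sq (by norm_num) hsin, h1, cot_pi_div_six_sq]

lemma energyIntegrand_eq (h1 : ktil 1 θ ≠ 0) (h5 : ktil 5 θ ≠ 0) :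
    energyIntegrand θ = energyPoly (cos (2 * θ)) / 36 :=
  calc
    energyIntegrand θ
    _ = sin θ ^ 2 * ((ktil 4 θ)⁻¹ * (ktil 2 θ)⁻¹) ^ 2 * (ktil 3 θ)⁻¹ ^ 2
          * (((ktil 5 θ)⁻¹ ^ 2 + (ktil 1 θ)⁻¹ ^ 2) / 2) := by
      rw [energyIntegrand]
      field_simp
    _ = sin θ ^ 2 * (cos θ ^ 2 - sin θ ^ 2 / 3) ^ 2 * cos θ ^ 2
          * (cos θ ^ 2 + 3 * sin θ ^ 2) := by
      rw [inv_ktil_four_mul_inv_ktil_two, inv_ktil_three, inv_ktil_five_sq_add_inv_ktil_one_sq]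
      ring
    _ = energyPoly (cos (2 * θ)) / 36 := by
      rw [energyPoly, cos_two_mul, sin_sq]
      ring

-- At `θ = π/6` the junk value `ktil 5 θ = 0` occurs, so the interval has to be open there.
lemma eqOn_energyIntegrand :
    Set.EqOn energyIntegrand (fun θ ↦ energyPoly (cos (2 * θ)) / 36) (Set.Ioo 0 (π / 6)) := by
  rintro θ ⟨hθ0, hθ6⟩
  have h1 : 0 < ktil 1 θ := ktil_pos (by simp) (by simp) (by positivity) (by push_cast; linarith)
  have h5 : 0 < ktil 5 θ := ktil_pos (by simp) (by simp) (by positivity) (by push_cast; linarith)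
  exact energyIntegrand_eq h1.ne' h5.ne'

end ContractionFactors

section TrigonometricIntegrals

variable (a b : ℝ)

lemma integral_sin_pow_mul_cos (n : ℕ) :
    ∫ t in a..b, sin t ^ n * cos t = (sin b ^ (n + 1) - sin a ^ (n + 1)) / (n + 1) := by
  simpa using integral_sin_pow_mul_cos_pow_odd (a := a) (b := b) n 0

lemma integral_energyPoly_cos :
    ∫ t in a..b, energyPoly (cos t) =
      (sin a * cos a - sin b * cos b + b - a) + ((b - a) / 2 - (sin (4 * b) - sin (4 * a)) / 8)
        + (sin b ^ 3 - sin a ^ 3) + 4 / 5 * (sin b ^ 5 - sin a ^ 5) := by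
  have hsplit (t : ℝ) : energyPoly (cos t) =
      2 * sin t ^ 2 + 4 * (sin t ^ 2 * cos t ^ 2) + 3 * (sin t ^ 2 * cos t)
        + 4 * (sin t ^ 4 * cos t) := by
    rw [energyPoly, show sin t ^ 4 = (sin t ^ 2) ^ 2 by ring, sin_sq]
    ring
  have hint {f : ℝ → ℝ} (hf : Continuous f) : IntervalIntegrable f volume a b :=
    hf.intervalIntegrable a b
  simp only [hsplit]
  rw [intervalIntegral.integral_add (hint (by fun_prop)) (hint (by fun_prop)),
    intervalIntegral.integral_add (hint (by fun_prop)) (hint (by fun_prop)),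
    intervalIntegral.integral_add (hint (by fun_prop)) (hint (by fun_prop))]
  simp only [intervalIntegral.integral_const_mul, integral_sin_sq, integral_sin_sq_mul_cos_sq,
    integral_sin_pow_mul_cos]
  push_cast
  ring

lemma integral_energyPoly_cos_zero_pi_div_three :
    ∫ t in (0 : ℝ)..(π / 3), energyPoly (cos t) = π / 2 + 33 * √3 / 80 := by
  have hsin : sin (4 * (π / 3)) = -(√3 / 2) := by
    rw [show 4 * (π / 3) = π / 3 + π by ring, sin_add_pi, sin_pi_div_three]
  have h3 : √3 ^ 2 = 3 := sq_sqrt (by norm_num)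
  rw [integral_energyPoly_cos, hsin, sin_pi_div_three, cos_pi_div_three]
  simp only [mul_zero, sin_zero]
  linear_combination (√3 / 8 + √3 * (√3 ^ 2 + 3) / 40) * h3

end TrigonometricIntegrals

/-- `4π ∫_0^{π/6} sin²θ/(k̃₁⋯k̃₅)² · (k̃₁²+k̃₅²)/2 dθ = π²/36 + (11√3/480)π`. -/
theorem stmt9 :
    4 * π * (∫ θ in (0:ℝ)..(π/6),
      (sin θ)^2 / (ktil 1 θ * ktil 2 θ * ktil 3 θ * ktil 4 θ * ktil 5 θ)^2
        * (((ktil 1 θ)^2 + (ktil 5 θ)^2) / 2))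
    = π^2/36 + 11 * Real.sqrt 3 / 480 * π := by
  calc 4 * π * ∫ θ in (0 : ℝ)..(π / 6), energyIntegrand θ
    _ = 4 * π * ∫ θ in (0 : ℝ)..(π / 6), energyPoly (cos (2 * θ)) / 36 := by
      rw [intervalIntegral.integral_congr_Ioo_of_le (by positivity) eqOn_energyIntegrand]
    _ = 4 * π * (2⁻¹ * (∫ t in (0 : ℝ)..(π / 3), energyPoly (cos t)) / 36) := by
      rw [intervalIntegral.integral_div,
        intervalIntegral.integral_comp_mul_left (fun t ↦ energyPoly (cos t)) two_ne_zero,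
        mul_zero, show 2 * (π / 6) = π / 3 by ring, smul_eq_mul]
    _ = π ^ 2 / 36 + 11 * √3 / 480 * π := by
      rw [integral_energyPoly_cos_zero_pi_div_three]
      ring
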